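/- Let G be a finite simple graph and ℓ ≥ 1. A set B ⊆ V(G) is a specified ℓ-leaky forcing set if and only if B is an (ℓ−1)-leaky forcing set (with respect to vertex leaks) such that for every set L of ℓ−1 vertex leaks and every vertex v ∈ V(G) \ B, there exist two distinct vertices x ≠ y with x→v ∈ ℱ_L(B) and y→v ∈ ℱ_L(B). -/

import Mathlib

/-!
Zero forcing with leaks (vertex leaks, edge leaks, specified leaks, mixed leaks).

A force `u → v` is modelled as the ordered pair `(u, v) : V × V`.  All the
leak notions are encoded by a set `P` of *prohibited* forces.
-/

variable {V : Type*}

/-- With blue set `S` and prohibited set of forces `P`, vertex `u` can force `v`: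
`u` is blue, `v` is a white neighbor of `u`, every other neighbor of `u` is blue,
and the force `u → v` is not prohibited. -/
def CanForce (G : SimpleGraph V) (P : Set (V × V)) (S : Set V) (u v : V) : Prop :=
  u ∈ S ∧ v ∉ S ∧ G.Adj u v ∧ (∀ w, G.Adj u w → w ≠ v → w ∈ S) ∧ (u, v) ∉ P

/-- `Forced G P B v` means vertex `v` is eventually colored blue when the zero
forcing color change rule (avoiding the prohibited forces `P`) is applied
exhaustively starting from the blue set `B`. -/
inductive Forced (G : SimpleGraph V) (P : Set (V × V)) (B : Set V) : V → Prop
  | init : ∀ {v : V}, v ∈ B → Forced G P B v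
  | force : ∀ {u v : V}, G.Adj u v → (u, v) ∉ P → Forced G P B u →
      (∀ w, G.Adj u w → w ≠ v → Forced G P B w) → Forced G P B v

/-- `B^[∞]_P`, the set of blue vertices after exhaustively applying the zero
forcing rule with prohibited forces `P`, starting from `B`. -/
def closureSet (G : SimpleGraph V) (P : Set (V × V)) (B : Set V) : Set V :=
  {v | Forced G P B v}

/-- The prohibited forces corresponding to a set `L` of vertex leaks: a vertex
leak may not perform any force. -/
def vertexLeaks (L : Set V) : Set (V × V) := {p | p.1 ∈ L}

/-- The prohibited forces corresponding to a set `L` of edge leaks: no force may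
pass across an edge leak in either direction. -/
def edgeLeaksP (L : Set (Sym2 V)) : Set (V × V) := {p | s(p.1, p.2) ∈ L}

/-- `B` is an `ℓ`-leaky forcing set of `G`: despite any set of (at most) `ℓ`
vertex leaks, exhaustive forcing colors all of `V(G)` blue. -/
def IsLeakyForcingSet (G : SimpleGraph V) (ℓ : ℕ) (B : Set V) : Prop :=
  ∀ L : Finset V, L.card ≤ ℓ → closureSet G (vertexLeaks ↑L) B = Set.univ

/-- `B` is an `ℓ`-edge-leaky forcing set of `G`: despite any set of (at most)
`ℓ` edge leaks, exhaustive forcing colors all of `V(G)` blue. -/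
def IsEdgeLeakyForcingSet (G : SimpleGraph V) (ℓ : ℕ) (B : Set V) : Prop :=
  ∀ L : Finset (Sym2 V), ↑L ⊆ G.edgeSet → L.card ≤ ℓ →
    closureSet G (edgeLeaksP ↑L) B = Set.univ

/-- `B` is a specified `ℓ`-leaky forcing set of `G`: despite any set of (at
most) `ℓ` specified leaks (prohibited forces between adjacent vertices),
exhaustive forcing colors all of `V(G)` blue. -/
def IsSpecifiedLeakyForcingSet (G : SimpleGraph V) (ℓ : ℕ) (B : Set V) : Prop :=
  ∀ L : Finset (V × V), (∀ p ∈ L, G.Adj p.1 p.2) → L.card ≤ ℓ →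
    closureSet G (↑L) B = Set.univ

/-- `B` is a mixed `ℓ`-leaky forcing set of `G`: despite any set of (at most)
`ℓ` leaks, each a vertex leak, an edge leak, or a specified leak, exhaustive
forcing colors all of `V(G)` blue. -/
def IsMixedLeakyForcingSet (G : SimpleGraph V) (ℓ : ℕ) (B : Set V) : Prop :=
  ∀ (L₁ : Finset V) (L₂ : Finset (Sym2 V)) (L₃ : Finset (V × V)),
    ↑L₂ ⊆ G.edgeSet → (∀ p ∈ L₃, G.Adj p.1 p.2) →
    L₁.card + L₂.card + L₃.card ≤ ℓ →
    closureSet G (vertexLeaks ↑L₁ ∪ edgeLeaksP ↑L₂ ∪ (↑L₃ : Set (V × V))) B = Set.univ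

/-- A chronologically valid list of forces starting from a blue set. -/
def ValidList (G : SimpleGraph V) (P : Set (V × V)) : Set V → List (V × V) → Prop
  | _, [] => True
  | S, f :: l => CanForce G P S f.1 f.2 ∧ ValidList G P (insert f.2 S) l

/-- `F` is a forcing process (set of forces) of `B` in `G` with prohibited
forces `P`: the forces of `F` admit a chronological ordering in which each force
is valid and after applying all of them the whole graph is blue. -/
def IsForcingProcess (G : SimpleGraph V) (P : Set (V × V)) (B : Set V)
    (F : Set (V × V)) : Prop :=
  ∃ l : List (V × V), {f | f ∈ l} = F ∧ ValidList G P B l ∧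
    B ∪ Prod.snd '' F = Set.univ

/-- `B'` is obtained from `B` using `F`: `B` can color exactly `B'` blue using
only a subset of the forces in `F`, applied in a chronologically valid order. -/
def ObtainedUsing (G : SimpleGraph V) (P : Set (V × V)) (B : Set V) (F : Set (V × V))
    (B' : Set V) : Prop :=
  ∃ l : List (V × V), (∀ f ∈ l, f ∈ F) ∧ ValidList G P B l ∧
    B' = B ∪ Prod.snd '' {f | f ∈ l}

/-- `ℱ_P(B)`: the set of forces that belong to some forcing process of `B`
(with prohibited forces `P`). -/
def potentialForces (G : SimpleGraph V) (P : Set (V × V)) (B : Set V) : Set (V × V) :=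
  {f | ∃ F, IsForcingProcess G P B F ∧ f ∈ F}

/-- `Z_(ℓ)(G)`, the `ℓ`-leaky forcing number of `G`. -/
noncomputable def Zleaky (G : SimpleGraph V) (ℓ : ℕ) : ℕ :=
  sInf {n | ∃ B : Finset V, B.card = n ∧ IsLeakyForcingSet G ℓ ↑B}

/-- `Z'_(ℓ)(G)`, the `ℓ`-edge-leaky forcing number of `G`. -/
noncomputable def ZedgeLeaky (G : SimpleGraph V) (ℓ : ℕ) : ℕ :=
  sInf {n | ∃ B : Finset V, B.card = n ∧ IsEdgeLeakyForcingSet G ℓ ↑B}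

/-- `Z^s_(ℓ)(G)`, the specified `ℓ`-leaky forcing number of `G`. -/
noncomputable def Zspec (G : SimpleGraph V) (ℓ : ℕ) : ℕ :=
  sInf {n | ∃ B : Finset V, B.card = n ∧ IsSpecifiedLeakyForcingSet G ℓ ↑B}

/-- `Z^m_(ℓ)(G)`, the mixed `ℓ`-leaky forcing number of `G`. -/
noncomputable def Zmixed (G : SimpleGraph V) (ℓ : ℕ) : ℕ :=
  sInf {n | ∃ B : Finset V, B.card = n ∧ IsMixedLeakyForcingSet G ℓ ↑B}

/-- Two sets of specified leaks on `V(G)` are isomorphic if some bijection of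
the vertex set matches them up. -/
def LeaksIso (L₁ L₂ : Set (V × V)) : Prop :=
  ∃ φ : V ≃ V, ∀ x y : V, (x, y) ∈ L₁ ↔ (φ x, φ y) ∈ L₂

/-- `B` is an `L`-leaky forcing set of `G`: `B` colors all of `V(G)` blue
despite any set of specified leaks isomorphic to a subset of `L`. -/
def IsLLeakyForcingSet (G : SimpleGraph V) (L : Set (V × V)) (B : Set V) : Prop :=
  ∀ L' : Set (V × V), (∃ L₂ ⊆ L, LeaksIso L' L₂) → closureSet G L' B = Set.univ

/-- `L` is a set of independent leaks: `|T(L)| = |L|` and `T(L) ∩ H(L) = ∅`. -/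
def IsIndependentLeaks [DecidableEq V] (L : Finset (V × V)) : Prop :=
  (L.image Prod.fst).card = L.card ∧ Disjoint (L.image Prod.fst) (L.image Prod.snd)

/-- `I(L)`: the size of a largest set of independent leaks contained in `L`. -/
noncomputable def maxIndepLeaks [DecidableEq V] (L : Finset (V × V)) : ℕ :=
  sSup {n | ∃ M ⊆ L, IsIndependentLeaks M ∧ M.card = n}

/-- `Z_L(G)`, the `L`-leaky forcing number of `G`. -/
noncomputable def ZLleaky (G : SimpleGraph V) (L : Set (V × V)) : ℕ :=
  sInf {n | ∃ B : Finset V, B.card = n ∧ IsLLeakyForcingSet G L ↑B}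



/-- A set containing `B` and stable under the permitted forces contains the closure. -/
theorem forced_mem_of_stable {G : SimpleGraph V} {P : Set (V × V)} {B C : Set V}
    (hB : B ⊆ C)
    (hC : ∀ u v, G.Adj u v → (u, v) ∉ P → u ∈ C → (∀ w, G.Adj u w → w ≠ v → w ∈ C) → v ∈ C)
    {v : V} (h : Forced G P B v) : v ∈ C := by
  induction h with
  | init h => exact hB h
  | force ha hp _ _ ih1 ih2 => exact hC _ _ ha hp ih1 ih2

theorem validList_mono {G : SimpleGraph V} {P P' : Set (V × V)} (h : P ⊆ P')
    (l : List (V × V)) : ∀ S, ValidList G P' S l → ValidList G P S l := by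
  induction l with
  | nil => intro S _; trivial
  | cons f l ih =>
    rintro S ⟨⟨h1, h2, h3, h4, h5⟩, h6⟩
    exact ⟨⟨h1, h2, h3, h4, fun h' => h5 (h h')⟩, ih _ h6⟩

theorem validList_mem {G : SimpleGraph V} {P : Set (V × V)}
    (l : List (V × V)) : ∀ S, ValidList G P S l → ∀ f ∈ l, f.2 ∉ S ∧ G.Adj f.1 f.2 ∧ f ∉ P := by
  induction l with
  | nil => intro S _ f hf; simp at hf
  | cons g l ih =>
    rintro S ⟨⟨h1, h2, h3, h4, h5⟩, h6⟩ f hf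
    rcases List.mem_cons.1 hf with rfl | hf
    · exact ⟨h2, h3, h5⟩
    · obtain ⟨a, b, c⟩ := ih _ h6 f hf
      exact ⟨fun h => a (Set.mem_insert_of_mem _ h), b, c⟩

theorem exists_validList [Fintype V] {G : SimpleGraph V} {P : Set (V × V)} {B : Set V}
    (h : closureSet G P B = Set.univ) : ∀ (n : ℕ) (S : Set V), B ⊆ S → Sᶜ.ncard = n →
      ∃ l, ValidList G P S l ∧ S ∪ Prod.snd '' {f | f ∈ l} = Set.univ := by
  intro n
  induction n with
  | zero =>
    intro S _ hn
    refine ⟨[], trivial, ?_⟩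
    have : Sᶜ = ∅ := (Set.ncard_eq_zero (Set.toFinite _)).1 hn
    simpa using Set.compl_empty_iff.1 this
  | succ n ih =>
    intro S hS hn
    have hex : ∃ u v, CanForce G P S u v := by
      by_contra hno
      have hall : ∀ v, v ∈ S := by
        intro v
        have hv : v ∈ closureSet G P B := by rw [h]; trivial
        refine forced_mem_of_stable hS ?_ hv
        intro u v ha hp hu hw
        by_contra hvS
        exact hno ⟨u, v, hu, hvS, ha, hw, hp⟩
      have : Sᶜ = ∅ := Set.compl_empty_iff.2 (Set.eq_univ_of_forall hall)
      rw [this] at hn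
      simp at hn
    obtain ⟨u, v, huv⟩ := hex
    have hcard : (insert v S)ᶜ.ncard = n := by
      have h1 : (insert v S)ᶜ = Sᶜ \ {v} := by
        ext w; simp [and_comm]
      have h2 : v ∈ Sᶜ := huv.2.1
      rw [h1, Set.ncard_sdiff_singleton_of_mem h2, hn]; rfl
    obtain ⟨l, hl, hu⟩ := ih (insert v S) (fun _ hx => Set.mem_insert_of_mem _ (hS hx)) hcard
    refine ⟨(u, v) :: l, ⟨huv, hl⟩, ?_⟩
    rw [← hu]
    ext w
    simp only [Set.mem_union, Set.mem_image, Set.mem_ofPred_eq, List.mem_cons, Set.mem_insert_iff]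
    constructor
    · rintro (h | ⟨f, rfl | h, rfl⟩)
      · exact Or.inl (Or.inr h)
      · exact Or.inl (Or.inl rfl)
      · exact Or.inr ⟨f, h, rfl⟩
    · rintro ((rfl | h) | ⟨f, h, rfl⟩)
      · exact Or.inr ⟨(u, w), Or.inl rfl, rfl⟩
      · exact Or.inl h
      · exact Or.inr ⟨f, Or.inr h, rfl⟩

/-- If the closure is everything then each vertex outside `B` is forced in some process,
by a force that is not prohibited. -/
theorem exists_potential [Fintype V] {G : SimpleGraph V} {P P' : Set (V × V)} {B : Set V}
    (hPP : P ⊆ P') (h : closureSet G P' B = Set.univ) {v : V} (hv : v ∉ B) :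
    ∃ x, (x, v) ∈ potentialForces G P B ∧ G.Adj x v ∧ (x, v) ∉ P' := by
  obtain ⟨l, hl, hu⟩ := exists_validList h _ B subset_rfl rfl
  have hvm : v ∈ B ∪ Prod.snd '' {f | f ∈ l} := by rw [hu]; trivial
  rcases hvm with hvm | ⟨⟨x, v'⟩, hf, rfl⟩
  · exact absurd hvm hv
  · obtain ⟨-, h2, h3⟩ := validList_mem l B hl _ hf
    exact ⟨x, ⟨_, ⟨l, rfl, validList_mono hPP l B hl, hu⟩, hf⟩, h2, h3⟩

/-- A specified `ℓ`-leaky forcing set also resists vertex leaks mixed with specified leaks. -/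
theorem spec_mixed [Fintype V] [DecidableEq V] {G : SimpleGraph V} {ℓ : ℕ} {B : Set V}
    (h : IsSpecifiedLeakyForcingSet G ℓ B) (L : Finset V) (Q : Finset (V × V))
    (hQ : ∀ p ∈ Q, G.Adj p.1 p.2) (hc : L.card + Q.card ≤ ℓ) :
    closureSet G (vertexLeaks ↑L ∪ ↑Q) B = Set.univ := by
  classical
  set C := closureSet G (vertexLeaks ↑L ∪ ↑Q) B with hCdef
  let M : Finset (V × V) := Finset.univ.filter (fun p => p.1 ∈ L ∧ G.Adj p.1 p.2 ∧ p.2 ∉ C ∧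
    ∀ w, G.Adj p.1 w → w ≠ p.2 → w ∈ C)
  have hM : ∀ p, p ∈ M ↔ (p.1 ∈ L ∧ G.Adj p.1 p.2 ∧ p.2 ∉ C ∧
      ∀ w, G.Adj p.1 w → w ≠ p.2 → w ∈ C) := by intro p; simp [M]
  have hMc : M.card ≤ L.card := by
    refine Finset.card_le_card_of_injOn Prod.fst (fun p hp => ((hM p).1 hp).1) ?_
    rintro ⟨a, b⟩ hp ⟨a', b'⟩ hq (rfl : a = a')
    obtain ⟨-, p2, p3, p4⟩ := (hM _).1 hp
    obtain ⟨-, q2, q3, q4⟩ := (hM _).1 hq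
    by_contra hne
    exact p3 (q4 b p2 (fun hb => hne (by simp only at hb; rw [hb])))
  have hall := h (M ∪ Q) (by
    intro p hp
    rcases Finset.mem_union.1 hp with hp | hp
    · exact ((hM p).1 hp).2.1
    · exact hQ p hp) (by
    have := Finset.card_union_le M Q
    omega)
  refine Set.eq_univ_of_forall fun v => ?_
  have hv : v ∈ closureSet G (↑(M ∪ Q)) B := by rw [hall]; trivial
  refine forced_mem_of_stable (fun _ hx => Forced.init hx) ?_ hv
  intro u v ha hp hu hw
  by_contra hvC
  have hpMQ : (u, v) ∉ M ∧ (u, v) ∉ Q := by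
    constructor
    · exact fun h' => hp (by simp [h'])
    · exact fun h' => hp (by simp [h'])
  refine hvC (Forced.force ha ?_ hu hw)
  rintro (h1 | h1)
  · exact hpMQ.1 ((hM _).2 ⟨h1, ha, hvC, hw⟩)
  · exact hpMQ.2 h1

/-- If the only way out of `C` is the force `x → w`, then `w` is only ever forced by `x`. -/
theorem validList_exit {G : SimpleGraph V} {P : Set (V × V)} {C : Set V} {x w y : V}
    (hw : w ∉ C)
    (hC : ∀ S ⊆ C, ∀ u v, CanForce G P S u v → v ∉ C → u = x ∧ v = w)
    (l : List (V × V)) : ∀ S ⊆ C, ValidList G P S l → (y, w) ∈ l → y = x := by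
  induction l with
  | nil => intro S _ _ h; simp at h
  | cons f l ih =>
    rintro S hS ⟨hf, hl⟩ hm
    rcases List.mem_cons.1 hm with rfl | hm
    · exact (hC S hS _ _ hf hw).1
    · by_cases hfC : f.2 ∈ C
      · exact ih _ (Set.insert_subset hfC hS) hl hm
      · have := (hC S hS _ _ hf hfC).2
        exact absurd (by simp [this]) (validList_mem l _ hl _ hm).1

/-- Theorem `specsetofforces`: `B` is a specified `ℓ`-leaky
forcing set iff `B` is an `(ℓ-1)`-leaky forcing set (w.r.t. vertex leaks) such
that for every set `L` of `ℓ-1` vertex leaks and every `v ∈ V(G) \ B` there are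
two distinct forces `x→v, y→v ∈ ℱ_L(B)`. -/
theorem statement7 [Fintype V] [DecidableEq V] (G : SimpleGraph V) (ℓ : ℕ)
    (hℓ : 1 ≤ ℓ) (B : Set V) :
    IsSpecifiedLeakyForcingSet G ℓ B ↔
      (IsLeakyForcingSet G (ℓ - 1) B ∧
        ∀ L : Finset V, L.card ≤ ℓ - 1 → ∀ v : V, v ∉ B →
          ∃ x y : V, x ≠ y ∧ (x, v) ∈ potentialForces G (vertexLeaks ↑L) B ∧
            (y, v) ∈ potentialForces G (vertexLeaks ↑L) B) := by
  classical
  constructor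
  · intro h
    have hleaky : IsLeakyForcingSet G (ℓ - 1) B := by
      intro L hL
      have := spec_mixed h L ∅ (by simp) (by simp; omega)
      simpa using this
    refine ⟨hleaky, fun L hL v hv => ?_⟩
    obtain ⟨x, hx, hxa, -⟩ := exists_potential subset_rfl (hleaky L hL) hv
    have h2 := spec_mixed h L {(x, v)} (by simpa using hxa) (by simp; omega)
    obtain ⟨y, hy, -, hyn⟩ := exists_potential Set.subset_union_left h2 hv
    refine ⟨x, y, ?_, hx, hy⟩
    rintro rfl
    exact hyn (Or.inr (by simp))
  · rintro ⟨hleaky, htwo⟩ Q hQ hQc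
    by_contra hne
    set C := closureSet G (↑Q) B with hCdef
    have hBC : B ⊆ C := fun _ hx => Forced.init hx
    let M : Finset (V × V) := Q.filter (fun p => p.2 ∉ C ∧
      ∀ w, G.Adj p.1 w → w ≠ p.2 → w ∈ C)
    have hM : ∀ p, p ∈ M ↔ (p ∈ Q ∧ p.2 ∉ C ∧
        ∀ w, G.Adj p.1 w → w ≠ p.2 → w ∈ C) := by intro p; simp [M]
    have huniq : ∀ a b b', (a, b) ∈ M → (a, b') ∈ M → b = b' := by
      intro a b b' hp hq
      obtain ⟨p1, p3, p4⟩ := (hM _).1 hp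
      obtain ⟨q1, q3, q4⟩ := (hM _).1 hq
      by_contra hne
      exact p3 (q4 b (hQ _ p1) hne)
    have hexit : ∀ u v, G.Adj u v → u ∈ C → (∀ w, G.Adj u w → w ≠ v → w ∈ C) → v ∉ C →
        (u, v) ∈ M := by
      intro u v ha hu hw hv
      by_contra hm
      refine hv (Forced.force ha ?_ hu hw)
      intro hq
      exact hm ((hM _).2 ⟨hq, hv, hw⟩)
    have hMne : M.Nonempty := by
      by_contra hemp
      rw [Finset.not_nonempty_iff_eq_empty] at hemp
      refine hne (Set.eq_univ_of_forall fun v => ?_)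
      have hv : v ∈ closureSet G (vertexLeaks ↑(∅ : Finset V)) B := by
        rw [hleaky ∅ (by simp)]; trivial
      refine forced_mem_of_stable hBC ?_ hv
      intro u v ha _ hu hw
      by_contra hvC
      have := hexit u v ha hu hw hvC
      rw [hemp] at this
      simp at this
    obtain ⟨⟨x, w⟩, hxw⟩ := hMne
    obtain ⟨-, hwC, -⟩ := (hM _).1 hxw
    let L : Finset V := (M.erase (x, w)).image Prod.fst
    have hLc : L.card ≤ ℓ - 1 := by
      have h1 : L.card ≤ (M.erase (x, w)).card := Finset.card_image_le
      rw [Finset.card_erase_of_mem hxw] at h1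
      have h2 : M.card ≤ Q.card := Finset.card_filter_le _ _
      omega
    have key : ∀ y, (y, w) ∈ potentialForces G (vertexLeaks ↑L) B → y = x := by
      rintro y ⟨F, ⟨l, rfl, hl, -⟩, hy⟩
      refine validList_exit hwC ?_ l B hBC hl hy
      rintro S hS u v ⟨h1, h2, h3, h4, h5⟩ hv
      have hm := hexit u v h3 (hS h1) (fun a b c => hS (h4 a b c)) hv
      by_contra hcon
      apply h5
      change u ∈ (↑L : Set V)
      refine Finset.mem_coe.2 (Finset.mem_image.2 ⟨(u, v), Finset.mem_erase.2 ⟨?_, hm⟩, rfl⟩)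
      intro he
      exact hcon (by simpa using he)
    obtain ⟨a, b, hab, ha, hb⟩ := htwo L hLc w (fun h => hwC (hBC h))
    exact hab ((key a ha).trans (key b hb).symm)
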